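/- Let U be a consistent c.e. theory and 𝒳 a set of sentences. Then U is effectively 𝒳-inseparable if and only if U is effectively ⋐-essentially 𝒳-m-incomplete, i.e. there is a partial computable function Ψ such that for every j, if U ⋐ W_j and W_j is mono-consistent, then Ψ(j) converges, Ψ(j) ∈ 𝒳, and Ψ(j) ∉ W_{j,m} ∪ W_{j,n}. -/

import Mathlib

open FirstOrder FirstOrder.Language

namespace PourEl

/-! ## Recursion-theoretic notions -/

/-- The `i`-th computably enumerable subset of `ℕ` (the domain of the `i`-th
partial computable function). -/
def WSet (i : ℕ) : Set ℕ :=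
  {n | ((Denumerable.ofNat Nat.Partrec.Code i).eval n).Dom}

/-- A set of natural numbers is computably enumerable. -/
def CE (A : Set ℕ) : Prop := ∃ i, A = WSet i

/-- A set of natural numbers is computable. -/
def Comp (A : Set ℕ) : Prop := ComputablePred (· ∈ A)

/-- Disjoint sets `X`, `Y` are computably separable iff some computable set
contains `X` and is disjoint from `Y`. -/
def CompSeparable (X Y : Set ℕ) : Prop :=
  ∃ Z : Set ℕ, Comp Z ∧ X ⊆ Z ∧ Y ∩ Z = ∅

/-- Computable inseparability. -/
def CompInseparable (X Y : Set ℕ) : Prop := ¬ CompSeparable X Y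

/-- `Z` and `W` weakly biseparate `X` and `Y`. -/
def WeaklyBiseparate {α : Type*} (Z W X Y : Set α) : Prop :=
  X ⊆ Z ∧ Y ⊆ W ∧ Z ∩ Y = ∅ ∧ W ∩ X = ∅

/-- `Z` and `W` biseparate `X` and `Y`. -/
def Biseparate {α : Type*} (Z W X Y : Set α) : Prop :=
  WeaklyBiseparate Z W X Y ∧ Z ∩ W = ∅

/-! ## Logical notions -/

variable {L : FirstOrder.Language}

/-- Provability: `φ` is a first-order consequence of `U` (by Gödel completeness,
semantic consequence). -/
def Prv (U : L.Theory) (φ : L.Sentence) : Prop := U ⊨ᵇ φ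

/-- `U_p`: the set of theorems of `U`. -/
def Thms (U : L.Theory) : Set L.Sentence := {φ | Prv U φ}

/-- `U_r`: the set of refutable sentences of `U`. -/
def Refut (U : L.Theory) : Set L.Sentence := {φ | Prv U ∼φ}

/-- Consistency: `U ⊬ ⊥`. -/
def Consistent (U : L.Theory) : Prop := ¬ Prv U ⊥

/-- `φ` is independent of `U`: `U` proves neither `φ` nor `¬φ`. -/
def Independent (U : L.Theory) (φ : L.Sentence) : Prop := ¬ Prv U φ ∧ ¬ Prv U ∼φ

/-- `U` is incomplete: some sentence is independent of it. -/
def Incomplete (U : L.Theory) : Prop := ∃ φ, Independent U φ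

/-- Mono-consequence: `U ⊢_m φ` iff `ψ ⊢ φ` for some `ψ ∈ U`. -/
def MPrv (U : L.Theory) (φ : L.Sentence) : Prop := ∃ ψ ∈ U, Prv {ψ} φ

/-- `U_m`: the set of mono-theorems of `U`. -/
def MThms (U : L.Theory) : Set L.Sentence := {φ | MPrv U φ}

/-- `U_n`: the set of mono-refutable sentences of `U`. -/
def MRefut (U : L.Theory) : Set L.Sentence := {φ | MPrv U ∼φ}

/-- Mono-consistency: every member is consistent by itself. -/
def MonoConsistent (U : L.Theory) : Prop := ∀ ψ ∈ U, Consistent ({ψ} : L.Theory)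

/-- `Û`: the set of all non-empty finite conjunctions of elements of `U`. -/
def hat (U : L.Theory) : L.Theory :=
  {φ | ∃ (ψ : L.Sentence) (l : List L.Sentence),
    ψ ∈ U ∧ (∀ χ ∈ l, χ ∈ U) ∧ φ = l.foldl (· ⊓ ·) ψ}

/-- `U ⋓ V`. -/
def Cup (U V : L.Theory) : L.Theory :=
  {χ | ∃ φ ∈ U, ∃ ψ ∈ V, χ = φ ⊓ ψ}

/-- `U ⋐ V`: for every `φ ∈ U` and `ψ ∈ V` there is `ρ ∈ V` with `ρ ⊢ φ ∧ ψ`. -/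
def Ssub (U V : L.Theory) : Prop :=
  ∀ φ ∈ U, ∀ ψ ∈ V, ∃ ρ ∈ V, Prv {ρ} (φ ⊓ ψ)

/-! ## Gödel numbering -/

/-- A Gödel numbering of the sentences of a (countable) signature: a bijective
coding of sentences by natural numbers that is effective for the basic syntactic
operations, and for which the theorems of a c.e. theory can be effectively
enumerated from an index of the theory. -/
structure Numbering (L : FirstOrder.Language) where
  equiv : L.Sentence ≃ ℕ
  neg_comp : Computable fun n => equiv ∼(equiv.symm n)
  inf_comp : Computable₂ fun m n => equiv (equiv.symm m ⊓ equiv.symm n)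
  imp_comp : Computable₂ fun m n => equiv (equiv.symm m ⟹ equiv.symm n)
  iff_comp : Computable₂ fun m n => equiv (equiv.symm m ⇔ equiv.symm n)
  thmIdx : ℕ → ℕ
  thmIdx_comp : Computable thmIdx
  thmIdx_spec : ∀ i, WSet (thmIdx i) = equiv '' Thms (equiv.symm '' WSet i)

namespace Numbering

variable (g : Numbering L)

/-- The code of a sentence. -/
def code (φ : L.Sentence) : ℕ := g.equiv φ

/-- The set of codes of a set of sentences. -/
def codes (S : Set L.Sentence) : Set ℕ := g.equiv '' S

/-- The theory axiomatised by the `i`-th c.e. set (identified with a set of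
sentences via the numbering). -/
def thy (i : ℕ) : L.Theory := g.equiv.symm '' WSet i

/-- The theory `U` is computably enumerable (with respect to the numbering). -/
def CEThy (U : L.Theory) : Prop := CE (g.codes U)

end Numbering



/-- `U` is effectively `X`-inseparable: a partial computable function uniformly
produces, from any pair of c.e. sets weakly biseparating `U_p` and `U_r`, a
sentence in `X` lying outside both. -/
def EffXInseparable (g : Numbering L) (U : L.Theory) (X : Set L.Sentence) : Prop :=
  ∃ Φ : ℕ → ℕ →. ℕ, Partrec₂ Φ ∧ ∀ i j,
    WeaklyBiseparate (WSet i) (WSet j) (g.codes (Thms U)) (g.codes (Refut U)) →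
    ∃ n ∈ Φ i j, n ∈ g.codes X ∧ n ∉ WSet i ∪ WSet j

/-!
For a base theory `U` and a set `A` of sentences, let `relMThms U A` be the set of consequences of
`U` together with a single element of `A`. Everything rests on the case where no element of `A` is
refutable in `U`. The set `relMThms U A` is then mono-consistent and `U ⋐ relMThms U A`, since a
consequence of `U` and `ψ` may be conjoined with any axiom of `U`; and, for nonempty `A`, the set
`relMThms U A` and the set of negands of its negations weakly biseparate `U_p` and `U_r`.

If `U ⋐ V` and `V` is mono-consistent, compactness shows that no element of `V` is refutable in
`U`: a refutation uses finitely many axioms of `U`, and one element of `V` implies them all. So an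
inseparability function applies with `A = U_p ∪ V`. Conversely, if `Z` and `W` weakly biseparate
`U_p` and `U_r`, an incompleteness function applies to `relMThms U A` with `A = Z ∪ {¬ψ : ψ ∈ W}`.
Both passages are effective because `relMThms U A` is c.e. uniformly in an index of `A`.
-/

section REPred

open Encodable Computable
open Nat.Partrec (Code)

variable {α β : Type*} [Primcodable α] [Primcodable β]

theorem rePred_comp {p : β → Prop} (hp : REPred p) {f : α → β} (hf : Computable f) :
    REPred fun a => p (f a) :=
  Partrec.comp hp hf

theorem rePred_and {p q : α → Prop} (hp : REPred p) (hq : REPred q) :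
    REPred fun a => p a ∧ q a :=
  (Partrec.bind hp (Partrec.comp hq fst).to₂).dom_re.of_eq fun a => by simp [Part.assert]

theorem rePred_or {p q : α → Prop} (hp : REPred p) (hq : REPred q) :
    REPred fun a => p a ∨ q a := by
  obtain ⟨k, hk, hdom⟩ := Partrec.merge' hp hq
  exact hk.dom_re.of_eq fun a => by simp [(hdom a).2, Part.assert]

theorem exists_code_eval_dom_iff {p : α → Prop} (hp : REPred p) :
    ∃ c : Code, ∀ n, (c.eval n).Dom ↔ ∃ a ∈ (decode n : Option α), p a := by
  obtain ⟨c, hc⟩ := Code.exists_code.1 hp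
  refine ⟨c, fun n => ?_⟩
  simp [hc, Part.dom_iff_mem]

theorem rePred_exists {p : α × β → Prop} (hp : REPred p) : REPred fun a => ∃ b, p (a, b) := by
  obtain ⟨c, hc⟩ := exists_code_eval_dom_iff hp
  have search : Partrec fun a : α => Nat.rfindOpt fun k =>
      c.evaln k.unpair.1 (Nat.pair (encode a) k.unpair.2) :=
    Partrec.rfindOpt <| Code.primrec_evaln.to_comp.comp <|
      ((fst.comp (unpair.comp snd)).pair (const c)).pair <|
        Primrec₂.natPair.to_comp.comp (Computable.encode.comp fst) (snd.comp (unpair.comp snd))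
  refine search.dom_re.of_eq fun a => ?_
  calc
    _ ↔ ∃ (k : ℕ) (x : ℕ), x ∈ c.evaln k.unpair.1 (Nat.pair (encode a) k.unpair.2) :=
      Nat.rfindOpt_dom
    _ ↔ ∃ m, (c.eval (Nat.pair (encode a) m)).Dom := by
      simp only [Part.dom_iff_mem, Code.evaln_complete]
      constructor
      · rintro ⟨k, x, hx⟩
        exact ⟨_, x, _, hx⟩
      · rintro ⟨m, x, k, hx⟩
        exact ⟨Nat.pair k m, x, by simpa using hx⟩
    _ ↔ ∃ b, p (a, b) := by
      simp only [hc, Encodable.decode_prod_val, Nat.unpair_pair, encodek, Option.bind_some,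
        Option.mem_def, Option.map_eq_some_iff]
      constructor
      · rintro ⟨m, _, ⟨b, -, rfl⟩, hb⟩
        exact ⟨b, hb⟩
      · rintro ⟨b, hb⟩
        exact ⟨encode b, (a, b), ⟨b, encodek b, rfl⟩, hb⟩

theorem rePred_mem_wSet : REPred fun x : ℕ × ℕ => x.2 ∈ WSet x.1 :=
  (Code.eval_part.comp ((Computable.ofNat Code).comp fst) snd).dom_re

theorem exists_computable_mem_wSet_iff {p : α × ℕ → Prop} (hp : REPred p) :
    ∃ f : α → ℕ, Computable f ∧ ∀ a n, n ∈ WSet (f a) ↔ p (a, n) := by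
  obtain ⟨c, hc⟩ := exists_code_eval_dom_iff hp
  refine ⟨fun a => encode (c.curry (encode a)), ?_, fun a n => ?_⟩
  · exact Computable.encode.comp <|
      Code.primrec₂_curry.to_comp.comp (const c) Computable.encode
  · simp [WSet, hc, Code.eval_curry]

end REPred

section Provability

variable {T U V A : L.Theory} {φ ψ : L.Sentence}

theorem Prv.of_mem (h : φ ∈ U) : Prv U φ :=
  Theory.models_sentence_of_mem h

theorem Prv.trans (hT : ∀ ψ ∈ T, Prv U ψ) (h : Prv T φ) : Prv U φ :=
  Theory.models_of_models_theory hT h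

theorem Prv.mono (hTU : T ⊆ U) (h : Prv T φ) : Prv U φ :=
  h.trans fun _ hψ => .of_mem (hTU hψ)

theorem Prv.trans_singleton (hψ : Prv U ψ) (h : Prv {ψ} φ) : Prv U φ :=
  h.trans (by simpa using hψ)

theorem prv_inf_iff : Prv U (φ ⊓ ψ) ↔ Prv U φ ∧ Prv U ψ := by
  simp only [Prv, Theory.models_sentence_iff, Sentence.realize_inf, forall_and]

theorem prv_not_not_iff : Prv U (∼(∼φ)) ↔ Prv U φ := by
  simp only [Prv, Theory.models_sentence_iff, Sentence.realize_not, not_not]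

theorem Prv.bot (h : Prv U φ) (hnot : Prv U ∼φ) : Prv U ⊥ :=
  Theory.models_sentence_iff.2 fun M =>
    absurd (h.realize_sentence M) ((Sentence.realize_not M).1 (hnot.realize_sentence M))

theorem prv_imp_iff : Prv U (ψ ⟹ φ) ↔ Prv (insert ψ U) φ := by
  constructor
  · refine fun h => Theory.models_sentence_iff.2 fun M => ?_
    obtain ⟨hψ, _⟩ := Theory.model_insert_iff.1 M.is_model
    exact (Sentence.realize_imp M).1 (h.realize_sentence M) hψ
  · refine fun h => Theory.models_sentence_iff.2 fun M => (Sentence.realize_imp M).2 fun hψ => ?_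
    have : (M : Type _) ⊨ insert ψ U := Theory.model_insert_iff.2 ⟨hψ, M.is_model⟩
    exact h.realize_sentence M

theorem prv_not_iff : Prv U ∼ψ ↔ Prv (insert ψ U) ⊥ :=
  prv_imp_iff

theorem thms_nonempty : (Thms U).Nonempty :=
  ⟨∼⊥, prv_not_iff.2 (.of_mem (Set.mem_insert ⊥ U))⟩

theorem disjoint_thms_refut (hU : Consistent U) : Disjoint (Thms U) (Refut U) :=
  Set.disjoint_left.2 fun _ hφ hnot => hU (hφ.bot hnot)

theorem disjoint_image_not_refut (h : Disjoint A (Thms U)) :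
    Disjoint ((∼·) '' A) (Refut U) := by
  rw [Set.disjoint_left] at h ⊢
  rintro _ ⟨φ, hφ, rfl⟩ hnot
  exact h hφ (prv_not_not_iff.1 hnot)

end Provability

section MonoConsequence

variable {T U V A B : L.Theory} {ψ : L.Sentence}

/-- The mono-theorems of `A` over the base theory `U`: the consequences of `U` together with a
single element of `A`. -/
def relMThms (U A : L.Theory) : L.Theory :=
  {φ | ∃ ψ ∈ A, Prv (insert ψ U) φ}

theorem subset_mThms : A ⊆ MThms A :=
  fun φ hφ => ⟨φ, hφ, .of_mem rfl⟩

theorem subset_relMThms : A ⊆ relMThms U A :=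
  fun φ hφ => ⟨φ, hφ, .of_mem (Set.mem_insert φ U)⟩

theorem mThms_subset_relMThms (hAB : A ⊆ B) : MThms A ⊆ relMThms U B := by
  rintro φ ⟨ψ, hψ, h⟩
  exact ⟨ψ, hAB hψ, h.mono (by simp)⟩

theorem thms_subset_relMThms (hA : A.Nonempty) : Thms U ⊆ relMThms U A :=
  fun _ hφ => hA.imp fun ψ hψ => ⟨hψ, hφ.mono (Set.subset_insert ψ U)⟩

theorem ssub_relMThms : Ssub U (relMThms U A) := by
  rintro φ hφ χ ⟨ψ, hψ, hχ⟩
  have hconj : Prv (insert ψ U) (φ ⊓ χ) :=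
    prv_inf_iff.2 ⟨.of_mem (Set.mem_insert_of_mem ψ hφ), hχ⟩
  exact ⟨φ ⊓ χ, ⟨ψ, hψ, hconj⟩, .of_mem rfl⟩

theorem monoConsistent_relMThms (hA : Disjoint A (Refut U)) : MonoConsistent (relMThms U A) := by
  rintro φ ⟨ψ, hψ, hφ⟩ hbot
  exact Set.disjoint_left.1 hA hψ (prv_not_iff.2 (hφ.trans_singleton hbot))

theorem weaklyBiseparate_relMThms (hne : A.Nonempty) (hA : Disjoint A (Refut U)) :
    WeaklyBiseparate (relMThms U A) {φ | ∼φ ∈ relMThms U A} (Thms U) (Refut U) := by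
  have consistent_insert {ψ} (hψ : ψ ∈ A) : Consistent (insert ψ U) := fun hbot =>
    Set.disjoint_left.1 hA hψ (prv_not_iff.2 hbot)
  refine ⟨thms_subset_relMThms hne, fun _ hφ => thms_subset_relMThms hne hφ, ?_, ?_⟩ <;>
    rw [← Set.disjoint_iff_inter_eq_empty, Set.disjoint_left]
  · rintro φ ⟨ψ, hψ, hφ⟩ hnot
    exact consistent_insert hψ (hφ.bot (hnot.mono (Set.subset_insert ψ U)))
  · rintro φ ⟨ψ, hψ, hnot⟩ hφ
    exact consistent_insert hψ (.bot (hφ.mono (Set.subset_insert ψ U)) hnot)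

theorem Ssub.exists_prv_of_finite (h : Ssub U V) (hψ : ψ ∈ V) (hT : T.Finite) (hTU : T ⊆ U) :
    ∃ ρ ∈ V, Prv {ρ} ψ ∧ ∀ φ ∈ T, Prv {ρ} φ := by
  induction T, hT using Set.Finite.induction_on with
  | empty => exact ⟨ψ, hψ, .of_mem rfl, by simp⟩
  | @insert χ T _ _ ih =>
    obtain ⟨hχ, hTU⟩ := Set.insert_subset_iff.1 hTU
    obtain ⟨ρ, hρ, hρψ, hρT⟩ := ih hTU
    obtain ⟨σ, hσ, hσχρ⟩ := h χ hχ ρ hρ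
    obtain ⟨hσχ, hσρ⟩ := prv_inf_iff.1 hσχρ
    exact ⟨σ, hσ, hσρ.trans_singleton hρψ,
      Set.forall_mem_insert.2 ⟨hσχ, fun φ hφ => hσρ.trans_singleton (hρT φ hφ)⟩⟩

theorem Ssub.disjoint_refut (h : Ssub U V) (hV : MonoConsistent V) : Disjoint V (Refut U) := by
  refine Set.disjoint_left.2 fun ψ hψ hnot => ?_
  obtain ⟨T, hTU, hTnot⟩ := Theory.models_iff_finset_models.1 hnot
  obtain ⟨ρ, hρ, hρψ, hρT⟩ := h.exists_prv_of_finite hψ T.finite_toSet hTU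
  exact hV ρ hρ (hρψ.bot (.trans hρT hTnot))

end MonoConsequence

namespace Numbering

variable {α : Type*} [Primcodable α] (g : Numbering L) {U : L.Theory} {V W : α → L.Theory}

/-- The theories `V a` are computably enumerable uniformly in the parameter `a`. -/
def UniformlyCE (V : α → L.Theory) : Prop :=
  REPred fun x : α × ℕ => g.equiv.symm x.2 ∈ V x.1

theorem mem_thy {i : ℕ} {φ : L.Sentence} : φ ∈ g.thy i ↔ g.code φ ∈ WSet i := by
  simp [thy, code]

theorem codes_thy (i : ℕ) : g.codes (g.thy i) = WSet i := by
  simp [codes, thy, Set.image_image]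

variable {g}

theorem uniformlyCE_thy {f : α → ℕ} (hf : Computable f) : g.UniformlyCE fun a => g.thy (f a) :=
  (rePred_comp rePred_mem_wSet ((hf.comp Computable.fst).pair Computable.snd)).of_eq fun x => by
    simp [mem_thy, code]

theorem uniformlyCE_thms (hU : g.CEThy U) : g.UniformlyCE fun _ : α => Thms U := by
  obtain ⟨i, hi⟩ := hU
  have thms_eq : g.thy (g.thmIdx i) = Thms U := by
    simp [thy, g.thmIdx_spec, ← hi, codes, Set.image_image]
  have hconst : Computable fun _ : α => g.thmIdx i := Computable.const _
  simpa only [thms_eq] using uniformlyCE_thy (g := g) hconst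

theorem UniformlyCE.union (hV : g.UniformlyCE V) (hW : g.UniformlyCE W) :
    g.UniformlyCE fun a => V a ∪ W a :=
  rePred_or hV hW

theorem UniformlyCE.preimage_not (hV : g.UniformlyCE V) :
    g.UniformlyCE fun a => {φ | ∼φ ∈ V a} :=
  (rePred_comp hV (Computable.fst.pair (g.neg_comp.comp Computable.snd))).of_eq fun x => by simp

theorem UniformlyCE.image_not (hV : g.UniformlyCE V) :
    g.UniformlyCE fun a => (∼·) '' V a := by
  have mem_V : REPred fun y : (α × ℕ) × ℕ => g.equiv.symm y.2 ∈ V y.1.1 :=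
    rePred_comp hV ((Computable.fst.comp Computable.fst).pair Computable.snd)
  have eq_not : REPred fun y : (α × ℕ) × ℕ => g.equiv ∼(g.equiv.symm y.2) = y.1.2 :=
    ComputablePred.to_re <| Computable.computablePred <| Primrec.eq.decide.to_comp.comp
      (g.neg_comp.comp Computable.snd) (Computable.snd.comp Computable.fst)
  refine (rePred_exists (rePred_and mem_V eq_not)).of_eq fun x => ?_
  simp [g.equiv.symm.surjective.exists, Equiv.eq_symm_apply]

theorem UniformlyCE.relMThms (hU : g.CEThy U) (hV : g.UniformlyCE V) :
    g.UniformlyCE fun a => relMThms U (V a) := by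
  have mem_V : REPred fun y : (α × ℕ) × ℕ => g.equiv.symm y.2 ∈ V y.1.1 :=
    rePred_comp hV ((Computable.fst.comp Computable.fst).pair Computable.snd)
  have prv_imp : REPred fun y : (α × ℕ) × ℕ =>
      Prv U (g.equiv.symm y.2 ⟹ g.equiv.symm y.1.2) :=
    (rePred_comp (uniformlyCE_thms (α := Unit) hU) ((Computable.const ()).pair
      (g.imp_comp.comp Computable.snd (Computable.snd.comp Computable.fst)))).of_eq fun y => by
        simp [Thms]
  refine (rePred_exists (rePred_and mem_V prv_imp)).of_eq fun x => ?_
  simp [PourEl.relMThms, g.equiv.symm.surjective.exists, prv_imp_iff]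

theorem UniformlyCE.exists_index (hV : g.UniformlyCE V) :
    ∃ f : α → ℕ, Computable f ∧ ∀ a, g.thy (f a) = V a := by
  obtain ⟨f, hf, hfV⟩ := exists_computable_mem_wSet_iff hV
  exact ⟨f, hf, fun a => Set.ext fun φ => by simp [mem_thy, hfV, code]⟩

end Numbering

section Incompleteness

variable {g : Numbering L} {U : L.Theory} {X : Set L.Sentence}

/-- `U` is effectively `⋐`-essentially `X`-m-incomplete: a partial computable function produces,
from any index of a mono-consistent `V` with `U ⋐ V`, a sentence in `X` that `V` neither
mono-proves nor mono-refutes. -/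
def EffEssMIncomplete (g : Numbering L) (U : L.Theory) (X : Set L.Sentence) : Prop :=
  ∃ Ψ : ℕ →. ℕ, Partrec Ψ ∧ ∀ j,
    Ssub U (g.thy j) → MonoConsistent (g.thy j) →
    ∃ n ∈ Ψ j, ∃ φ : L.Sentence, g.code φ = n ∧ φ ∈ X ∧
      φ ∉ MThms (g.thy j) ∪ MRefut (g.thy j)

theorem weaklyBiseparate_codes_iff {Z W S T : Set L.Sentence} :
    WeaklyBiseparate (g.codes Z) (g.codes W) (g.codes S) (g.codes T) ↔
      WeaklyBiseparate Z W S T := by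
  have inj := g.equiv.injective
  simp only [WeaklyBiseparate, Numbering.codes, Set.image_subset_image_iff inj,
    ← Set.image_inter inj, Set.image_eq_empty]

theorem effXInseparable_iff :
    EffXInseparable g U X ↔ ∃ Φ : ℕ → ℕ →. ℕ, Partrec₂ Φ ∧ ∀ i j,
      WeaklyBiseparate (g.thy i) (g.thy j) (Thms U) (Refut U) →
      ∃ n ∈ Φ i j, ∃ φ : L.Sentence, g.code φ = n ∧ φ ∈ X ∧ φ ∉ g.thy i ∪ g.thy j := by
  refine exists_congr fun Φ => and_congr_right fun _ => forall₂_congr fun i j => ?_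
  rw [← g.codes_thy i, ← g.codes_thy j, weaklyBiseparate_codes_iff]
  refine imp_congr_right fun _ => exists_congr fun n => and_congr_right fun _ => ?_
  obtain ⟨φ, rfl⟩ := g.equiv.surjective n
  simp [Numbering.codes, Numbering.code]

theorem EffXInseparable.effEssMIncomplete (hU : g.CEThy U) (hcon : Consistent U)
    (h : EffXInseparable g U X) : EffEssMIncomplete g U X := by
  obtain ⟨Φ, hΦ, hΦX⟩ := effXInseparable_iff.1 h
  -- Adjoining `Thms U` matters only when `g.thy j` is empty.
  have hZ : g.UniformlyCE fun j => relMThms U (Thms U ∪ g.thy j) :=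
    .relMThms hU (.union (Numbering.uniformlyCE_thms hU) (Numbering.uniformlyCE_thy .id))
  obtain ⟨z, hz, hzZ⟩ := hZ.exists_index
  obtain ⟨w, hw, hwW⟩ := hZ.preimage_not.exists_index
  refine ⟨fun j => Φ (z j) (w j), hΦ.comp hz hw, fun j hsub hmono => ?_⟩
  have hne : (Thms U ∪ g.thy j).Nonempty := thms_nonempty.inl
  have hdisj : Disjoint (Thms U ∪ g.thy j) (Refut U) :=
    Set.disjoint_union_left.2 ⟨disjoint_thms_refut hcon, hsub.disjoint_refut hmono⟩
  obtain ⟨n, hn, φ, hφn, hφX, hφ⟩ :=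
    hΦX (z j) (w j) (by rw [hzZ, hwW]; exact weaklyBiseparate_relMThms hne hdisj)
  have mThms_subset : MThms (g.thy j) ⊆ relMThms U (Thms U ∪ g.thy j) :=
    mThms_subset_relMThms Set.subset_union_right
  rw [hzZ, hwW] at hφ
  exact ⟨n, hn, φ, hφn, hφX, fun hm => hφ (hm.imp (mThms_subset ·) (mThms_subset ·))⟩

theorem EffEssMIncomplete.effXInseparable (hU : g.CEThy U) (h : EffEssMIncomplete g U X) :
    EffXInseparable g U X := by
  obtain ⟨Ψ, hΨ, hΨX⟩ := h
  have hV : g.UniformlyCE fun x : ℕ × ℕ => relMThms U (g.thy x.1 ∪ (∼·) '' g.thy x.2) :=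
    .relMThms hU <|
      .union (Numbering.uniformlyCE_thy .fst) (Numbering.uniformlyCE_thy .snd).image_not
  obtain ⟨v, hv, hvV⟩ := hV.exists_index
  refine effXInseparable_iff.2 ⟨fun i j => Ψ (v (i, j)), hΨ.comp hv, fun i j hsep => ?_⟩
  obtain ⟨-, -, hi, hj⟩ := hsep
  rw [← Set.disjoint_iff_inter_eq_empty] at hi hj
  have hdisj : Disjoint (g.thy i ∪ (∼·) '' g.thy j) (Refut U) :=
    Set.disjoint_union_left.2 ⟨hi, disjoint_image_not_refut hj⟩
  obtain ⟨n, hn, φ, hφn, hφX, hφ⟩ := hΨX (v (i, j)) (hvV _ ▸ ssub_relMThms)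
    (hvV _ ▸ monoConsistent_relMThms hdisj)
  have subset_mThms_v : g.thy i ∪ (∼·) '' g.thy j ⊆ MThms (g.thy (v (i, j))) :=
    hvV (i, j) ▸ subset_relMThms.trans subset_mThms
  refine ⟨n, hn, φ, hφn, hφX, fun hmem => hφ (hmem.imp ?_ ?_)⟩
  · exact fun hφi => subset_mThms_v (.inl hφi)
  · exact fun hφj => subset_mThms_v (.inr ⟨φ, hφj, rfl⟩)

end Incompleteness

/-- A consistent c.e. theory `U` is effectively `X`-inseparable
iff it is effectively `⋐`-essentially `X`-m-incomplete: some partial computable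
`Ψ` produces, for every `j` with `U ⋐ W j` and `W j` mono-consistent, a sentence
in `X` outside `(W j)_m ∪ (W j)_n`. -/
theorem statement7 {L : FirstOrder.Language} (g : Numbering L) (U : L.Theory)
    (hU : g.CEThy U) (hcon : Consistent U) (X : Set L.Sentence) :
    EffXInseparable g U X ↔
      ∃ Ψ : ℕ →. ℕ, Partrec Ψ ∧ ∀ j,
        Ssub U (g.thy j) → MonoConsistent (g.thy j) →
        ∃ n ∈ Ψ j, ∃ φ : L.Sentence, g.code φ = n ∧ φ ∈ X ∧
          φ ∉ MThms (g.thy j) ∪ MRefut (g.thy j) := by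
  exact ⟨EffXInseparable.effEssMIncomplete hU hcon, EffEssMIncomplete.effXInseparable hU⟩

end PourEl
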